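/- arXiv:2305.17599 — 3 statements merged into one kernel-verified Lean document; each statement's English description precedes it below -/
import Mathlib

section
/- Let x < y be points of [0,1) lying in the same continuity interval, i.e. no point of the set {T^{-j}(0) : 0 ≤ j ≤ n−1} lies in the arc (x, y]. Then for every index 0 ≤ i ≤ n−1 the ordered eigenvalues of the periodic restriction satisfy λ·γ₋·C₋·ν([x,y]) ≤ μ̃_i(y) − μ̃_i(x) ≤ λ·γ₊·C₊·ν([x,y]); in particular each μ̃_i is strictly increasing and bi-Lipschitz with respect to the invariant measure ν on each such interval. -/
open MeasureTheory Polynomial Filter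

noncomputable section

attribute [local instance] Matrix.normedAddCommGroup

/-- Dirichlet restriction `H_n(x)` of the Schrödinger operator with potential
`n ↦ λ f (T^n x)` to `[0, n-1]`: tridiagonal with diagonal `λ f (T^j x)` and `1`
on the two off-diagonals. -/
def HDir (lam : ℝ) (f : ℝ → ℝ) (T : Equiv.Perm ℝ) (x : ℝ) (n : ℕ) :
    Matrix (Fin n) (Fin n) ℝ :=
  Matrix.of fun i j : Fin n =>
    (if i = j then lam * f ((T ^ (i : ℕ)) x) else 0) +
    (if (i : ℕ) + 1 = (j : ℕ) ∨ (j : ℕ) + 1 = (i : ℕ) then 1 else 0)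

/-- Periodic restriction `H̃_n(x)`: the Dirichlet restriction with additional
entries `1` in the corners `(0, n-1)` and `(n-1, 0)`. -/
def HPer (lam : ℝ) (f : ℝ → ℝ) (T : Equiv.Perm ℝ) (x : ℝ) (n : ℕ) :
    Matrix (Fin n) (Fin n) ℝ :=
  HDir lam f T x n +
    Matrix.of (fun i j : Fin n =>
      if ((i : ℕ) = 0 ∧ (j : ℕ) = n - 1) ∨ ((i : ℕ) = n - 1 ∧ (j : ℕ) = 0) then (1 : ℝ) else 0)

/-- `P_n(x,E) = det (H_n(x) - E)`. -/
def Pdet (lam : ℝ) (f : ℝ → ℝ) (T : Equiv.Perm ℝ) (x E : ℝ) (n : ℕ) : ℝ :=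
  (HDir lam f T x n - E • (1 : Matrix (Fin n) (Fin n) ℝ)).det

/-- `P_n(x,E)` with integer index, with the conventions `P_0 = 1` and `P_n = 0` for `n < 0`. -/
def PdetI (lam : ℝ) (f : ℝ → ℝ) (T : Equiv.Perm ℝ) (x E : ℝ) (n : ℤ) : ℝ :=
  if 0 ≤ n then Pdet lam f T x E n.toNat else 0

/-- `P̃_n(x,E) = det (H̃_n(x) - E)`. -/
def PtildeDet (lam : ℝ) (f : ℝ → ℝ) (T : Equiv.Perm ℝ) (x E : ℝ) (n : ℕ) : ℝ :=
  (HPer lam f T x n - E • (1 : Matrix (Fin n) (Fin n) ℝ)).det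

/-- One-step transfer matrix `A_i(x,E)`. -/
def transferA (lam : ℝ) (f : ℝ → ℝ) (T : Equiv.Perm ℝ) (E x : ℝ) (i : ℕ) :
    Matrix (Fin 2) (Fin 2) ℝ :=
  !![E - lam * f ((T ^ i) x), -1; 1, 0]

/-- `n`-step transfer matrix `M_n(x,E) = A_{n-1} ⋯ A_0`. -/
def transferM (lam : ℝ) (f : ℝ → ℝ) (T : Equiv.Perm ℝ) (E x : ℝ) :
    ℕ → Matrix (Fin 2) (Fin 2) ℝ
  | 0 => 1
  | m + 1 => transferA lam f T E x m * transferM lam f T E x m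

/-- Dirichlet restriction `H_{[a, a+m-1]}(x)` of the operator to the integer
interval starting at `a : ℤ` of length `m`. -/
def HBox (lam : ℝ) (f : ℝ → ℝ) (T : Equiv.Perm ℝ) (x : ℝ) (a : ℤ) (m : ℕ) :
    Matrix (Fin m) (Fin m) ℝ :=
  Matrix.of fun i j : Fin m =>
    (if i = j then lam * f ((T ^ (a + ((i : ℕ) : ℤ))) x) else 0) +
    (if (i : ℕ) + 1 = (j : ℕ) ∨ (j : ℕ) + 1 = (i : ℕ) then 1 else 0)

/-- Green function `G_{x,E,[a,a+m-1]} = (H_{[a,a+m-1]}(x) - E)⁻¹`. -/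
def GBox (lam : ℝ) (f : ℝ → ℝ) (T : Equiv.Perm ℝ) (x E : ℝ) (a : ℤ) (m : ℕ) :
    Matrix (Fin m) (Fin m) ℝ :=
  (HBox lam f T x a m - E • (1 : Matrix (Fin m) (Fin m) ℝ))⁻¹

/-- A point `n : ℤ` is `(x, c, qk)`-regular: there is an interval `[a, b]` of length
`qk` (`b = a + qk - 1`) containing `n` with `|n - a| ≥ qk/5`, `|n - b| ≥ qk/5` and
`|G(a,n)| ≤ e^{-c|n-a|}`, `|G(n,b)| ≤ e^{-c|n-b|}`. -/
def RegularPt (lam : ℝ) (f : ℝ → ℝ) (T : Equiv.Perm ℝ) (x E c : ℝ) (qk : ℕ) (n : ℤ) : Prop :=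
  ∃ (a : ℤ) (i0 i j : Fin qk),
    (i0 : ℕ) = 0 ∧ (j : ℕ) = qk - 1 ∧ n = a + ((i : ℕ) : ℤ) ∧
    (qk : ℝ) / 5 ≤ ((i : ℕ) : ℝ) ∧ (qk : ℝ) / 5 ≤ ((j : ℕ) : ℝ) - ((i : ℕ) : ℝ) ∧
    |GBox lam f T x E a qk i0 i| ≤ Real.exp (-c * ((i : ℕ) : ℝ)) ∧
    |GBox lam f T x E a qk i j| ≤ Real.exp (-c * (((j : ℕ) : ℝ) - ((i : ℕ) : ℝ)))

/-- The `ν`-measure of the positively oriented arc of the circle `ℝ/ℤ` from `u` to `v`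
(computed for a `1`-periodic measure `ν` on `ℝ`). -/
def arcMeasure (ν : Measure ℝ) (u v : ℝ) : ℝ :=
  (ν (Set.Icc u (u + Int.fract (v - u)))).toReal

/-- The `ν`-measure of the smaller of the two complementary arcs between `u` and `v`. -/
def arcDist (ν : Measure ℝ) (u v : ℝ) : ℝ :=
  min (arcMeasure ν u v) (arcMeasure ν v u)

/-- The measure of the gap of the orbit point `T^j x` in the partition of the circle
by `x, Tx, …, T^{qk-1}x`: the measure of the positively oriented arc from `T^j x` to the
closest (in the positive direction) other orbit point. -/
def gapMeas (ν : Measure ℝ) (T : Equiv.Perm ℝ) (x : ℝ) (qk : ℕ) (j : ℕ) : ℝ :=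
  sInf ((fun j' : ℕ => arcMeasure ν ((T ^ j) x) ((T ^ j') x)) '' {j' | j' < qk ∧ j' ≠ j})

/-- `β(α) = limsup_k (ln q_{k+1}) / q_k` computed from the sequence of
continued-fraction denominators. -/
def cfBeta (q : ℕ → ℕ) : ℝ :=
  Filter.limsup (fun k : ℕ => Real.log (q (k + 1) : ℝ) / (q k : ℝ)) Filter.atTop

/-!
On `(x, y]` no iterate `T ^ j`, `j < n`, takes an integer value, so `T ^ j x` and `T ^ j y` lie in
the same unit interval and the bi-Lipschitz bound for `f` controls `f (T ^ j y) - f (T ^ j x)` by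
`T ^ j y - T ^ j x`. This length is comparable to `ν [T ^ j x, T ^ j y] = ν [x, y]`. Hence
`H̃_n(y) - H̃_n(x)` is a diagonal matrix whose entries all lie between the two claimed bounds, and
Weyl's monotonicity principle passes these bounds on to the ordered eigenvalues.

Weyl's principle is the Courant-Fischer dimension count: for each index `i` some nonzero vector is
orthogonal to the eigenvectors of the first operator below `i` and to those of the second one
above `i`, and comparing the two quadratic forms there compares the `i`-th eigenvalues.
-/

section Weyl

open scoped InnerProductSpace

variable {𝕜 ι E : Type*} [RCLike 𝕜] [Fintype ι] [NormedAddCommGroup E] [InnerProductSpace 𝕜 E]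

lemma exists_ne_zero_forall_inner_eq_zero [FiniteDimensional 𝕜 E] (w : ι → E)
    (hw : Fintype.card ι < Module.finrank 𝕜 E) : ∃ v ≠ 0, ∀ j, ⟪w j, v⟫_𝕜 = 0 := by
  let F : E →ₗ[𝕜] ι → 𝕜 := LinearMap.pi fun j => innerₛₗ 𝕜 (w j)
  have hker : LinearMap.ker F ≠ ⊥ := LinearMap.ker_ne_bot_of_finrank_lt (by simpa using hw)
  obtain ⟨v, hv, hv0⟩ := Submodule.exists_mem_ne_zero_of_ne_bot hker
  exact ⟨v, hv0, fun j => congrFun hv j⟩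

lemma exists_ne_zero_inner_eq_zero_of_lt_of_gt [LinearOrder ι] (p q : OrthonormalBasis ι 𝕜 E)
    (i : ι) : ∃ v ≠ 0, (∀ j < i, ⟪p j, v⟫_𝕜 = 0) ∧ ∀ j > i, ⟪q j, v⟫_𝕜 = 0 := by
  have : FiniteDimensional 𝕜 E := p.toBasis.finiteDimensional_of_finite
  have hcard : Fintype.card {j // j ≠ i} < Module.finrank 𝕜 E := by
    rw [Module.finrank_eq_card_basis p.toBasis]
    exact Fintype.card_subtype_lt (x := i) (by simp)
  obtain ⟨v, hv0, hv⟩ := exists_ne_zero_forall_inner_eq_zero (𝕜 := 𝕜)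
    (fun j : {j // j ≠ i} => if (j : ι) < i then p j else q j) hcard
  refine ⟨v, hv0, fun j hj => ?_, fun j hj => ?_⟩
  · simpa [hj] using hv ⟨j, hj.ne⟩
  · simpa [not_lt_of_gt hj] using hv ⟨j, hj.ne'⟩

variable {S T : E →ₗ[𝕜] E} {a b : ι → ℝ}

lemma re_inner_apply_eq_sum_of_eigenbasis (p : OrthonormalBasis ι 𝕜 E)
    (hp : ∀ j, S (p j) = (a j : 𝕜) • p j) (v : E) :
    RCLike.re ⟪v, S v⟫_𝕜 = ∑ j, a j * ‖⟪p j, v⟫_𝕜‖ ^ 2 := by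
  have hSv : S v = ∑ j, ⟪p j, v⟫_𝕜 • (a j : 𝕜) • p j := by
    conv_lhs => rw [← p.sum_repr' v]
    simp only [map_sum, map_smul, hp]
  have hterm (j : ι) : ⟪v, ⟪p j, v⟫_𝕜 • (a j : 𝕜) • p j⟫_𝕜
      = ((a j * ‖⟪p j, v⟫_𝕜‖ ^ 2 : ℝ) : 𝕜) := by
    rw [inner_smul_right, inner_smul_right, mul_left_comm, ← inner_conj_symm v, RCLike.mul_conj]
    push_cast
    rfl
  simp only [hSv, inner_sum, hterm, map_sum, RCLike.ofReal_re]

lemma mul_norm_sq_le_re_inner_of_eigenbasis (p : OrthonormalBasis ι 𝕜 E)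
    (hp : ∀ j, S (p j) = (a j : 𝕜) • p j) {r : ℝ} {v : E}
    (hv : ∀ j, a j < r → ⟪p j, v⟫_𝕜 = 0) : r * ‖v‖ ^ 2 ≤ RCLike.re ⟪v, S v⟫_𝕜 := by
  rw [re_inner_apply_eq_sum_of_eigenbasis p hp, ← p.sum_sq_norm_inner_right v, Finset.mul_sum]
  refine Finset.sum_le_sum fun j _ => ?_
  rcases lt_or_ge (a j) r with hj | hj
  · simp [hv j hj]
  · gcongr

lemma re_inner_le_mul_norm_sq_of_eigenbasis (p : OrthonormalBasis ι 𝕜 E)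
    (hp : ∀ j, S (p j) = (a j : 𝕜) • p j) {r : ℝ} {v : E}
    (hv : ∀ j, r < a j → ⟪p j, v⟫_𝕜 = 0) : RCLike.re ⟪v, S v⟫_𝕜 ≤ r * ‖v‖ ^ 2 := by
  have hneg := mul_norm_sq_le_re_inner_of_eigenbasis (S := -S) (a := -a) (r := -r) (v := v) p
    (fun j => by simp [hp]) fun j hj => hv j (neg_lt_neg_iff.mp hj)
  simpa using hneg

lemma add_le_of_eigenbasis_of_isPositive_sub [LinearOrder ι] (p q : OrthonormalBasis ι 𝕜 E)
    (hp : ∀ j, S (p j) = (a j : 𝕜) • p j) (hq : ∀ j, T (q j) = (b j : 𝕜) • q j)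
    (ha : Monotone a) (hb : Monotone b) {c : ℝ} (hST : (T - S - (c : 𝕜) • 1).IsPositive) (i : ι) :
    a i + c ≤ b i := by
  obtain ⟨v, hv0, hpv, hqv⟩ := exists_ne_zero_inner_eq_zero_of_lt_of_gt p q i
  have hS := mul_norm_sq_le_re_inner_of_eigenbasis p hp fun j hj => hpv j (ha.reflect_lt hj)
  have hT := re_inner_le_mul_norm_sq_of_eigenbasis q hq fun j hj => hqv j (hb.reflect_lt hj)
  have hform : RCLike.re ⟪v, S v⟫_𝕜 + c * ‖v‖ ^ 2 ≤ RCLike.re ⟪v, T v⟫_𝕜 := by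
    have h := hST.re_inner_nonneg_right v
    simp only [LinearMap.sub_apply, LinearMap.smul_apply, Module.End.one_apply, inner_sub_right,
      inner_smul_right, map_sub, RCLike.re_ofReal_mul, inner_self_eq_norm_sq] at h
    linarith
  have hnorm : 0 < ‖v‖ ^ 2 := by positivity
  exact le_of_mul_le_mul_right (by linarith) hnorm

end Weyl

lemma exists_perm_eq_comp_of_map_univ_eq {ι β : Type*} [Fintype ι] {a b : ι → β}
    (h : Finset.univ.val.map a = Finset.univ.val.map b) : ∃ σ : Equiv.Perm ι, a = b ∘ σ := by
  classical
  have hfiber (c : β) : Nonempty ({j // a j = c} ≃ {j // b j = c}) := by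
    have hcount := congrArg (Multiset.count c) h
    refine ⟨Fintype.equivOfCardEq ?_⟩
    simpa [Multiset.count_map, Fintype.card_subtype, Finset.card_def, eq_comm] using hcount
  exact ⟨Equiv.ofFiberEquiv fun c => (hfiber c).some,
    funext fun j => (Equiv.ofFiberEquiv_map _ j).symm⟩

section Matrix

open scoped ComplexOrder

variable {𝕜 ι : Type*} [RCLike 𝕜] [Fintype ι] [DecidableEq ι] {A B : Matrix ι ι 𝕜} {a b : ι → ℝ}

lemma exists_eigenbasis_of_charpoly_eq_prod (hA : A.IsHermitian)
    (ha : A.charpoly = ∏ i, (X - C (a i : 𝕜))) :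
    ∃ p : OrthonormalBasis ι 𝕜 (EuclideanSpace 𝕜 ι),
      ∀ j, Matrix.toEuclideanLin A (p j) = (a j : 𝕜) • p j := by
  have hroots : Finset.univ.val.map (RCLike.ofReal ∘ a : ι → 𝕜)
      = Finset.univ.val.map (RCLike.ofReal ∘ hA.eigenvalues) := by
    rw [← hA.roots_charpoly_eq_eigenvalues, ha,
      roots_prod _ _ (Finset.prod_ne_zero_iff.mpr fun i _ => X_sub_C_ne_zero _)]
    simp
  obtain ⟨σ, hσ⟩ := exists_perm_eq_comp_of_map_univ_eq hroots
  refine ⟨hA.eigenvectorBasis.reindex σ.symm, fun j => ?_⟩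
  have haj : (a j : 𝕜) = hA.eigenvalues (σ j) := congrFun hσ j
  ext k
  have hk := congrFun (hA.mulVec_eigenvectorBasis (σ j)) k
  simpa [haj, Matrix.toLpLin_apply, RCLike.real_smul_eq_coe_mul] using hk

lemma add_le_of_charpoly_eq_prod_of_posSemidef_sub [LinearOrder ι] (hA : A.IsHermitian)
    (hB : B.IsHermitian) (ha : A.charpoly = ∏ i, (X - C (a i : 𝕜)))
    (hb : B.charpoly = ∏ i, (X - C (b i : 𝕜))) (ha_mono : Monotone a) (hb_mono : Monotone b)
    {c : ℝ} (hAB : (B - A - (c : 𝕜) • 1).PosSemidef) (i : ι) : a i + c ≤ b i := by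
  obtain ⟨p, hp⟩ := exists_eigenbasis_of_charpoly_eq_prod hA ha
  obtain ⟨q, hq⟩ := exists_eigenbasis_of_charpoly_eq_prod hB hb
  refine add_le_of_eigenbasis_of_isPositive_sub p q hp hq ha_mono hb_mono ?_ i
  rwa [← Matrix.isPositive_toEuclideanLin_iff, map_sub, map_sub, map_smul,
    Matrix.toLpLin_one] at hAB

end Matrix

section PeriodicRestriction

variable (lam : ℝ) (f : ℝ → ℝ) (T : Equiv.Perm ℝ) (x y : ℝ) (n : ℕ)

lemma HDir_isHermitian : (HDir lam f T x n).IsHermitian := by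
  ext i j
  rcases eq_or_ne i j with rfl | hij
  · rfl
  · simp [HDir, hij, hij.symm, or_comm]

lemma HPer_isHermitian : (HPer lam f T x n).IsHermitian := by
  refine (HDir_isHermitian lam f T x n).add (Matrix.IsHermitian.ext fun i j => ?_)
  simp [and_comm, or_comm]

lemma HPer_sub_HPer :
    HPer lam f T y n - HPer lam f T x n =
      Matrix.diagonal fun j : Fin n => lam * (f ((T ^ (j : ℕ)) y) - f ((T ^ (j : ℕ)) x)) := by
  ext i j
  simp only [HPer, HDir, Matrix.add_apply, Matrix.sub_apply, Matrix.of_apply,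
    Matrix.diagonal_apply]
  split_ifs <;> ring

variable {lam f T x y n} {a b : Fin n → ℝ}

lemma HPer_eigenvalue_add_le
    (ha : (HPer lam f T x n).charpoly = ∏ i, (X - C (a i))) (ha_mono : Monotone a)
    (hb : (HPer lam f T y n).charpoly = ∏ i, (X - C (b i))) (hb_mono : Monotone b) {c : ℝ}
    (hc : ∀ j < n, c ≤ lam * (f ((T ^ j) y) - f ((T ^ j) x))) (i : Fin n) : a i + c ≤ b i := by
  refine add_le_of_charpoly_eq_prod_of_posSemidef_sub (𝕜 := ℝ) (HPer_isHermitian lam f T x n)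
    (HPer_isHermitian lam f T y n) ha hb ha_mono hb_mono ?_ i
  rw [HPer_sub_HPer, Matrix.smul_one_eq_diagonal, Matrix.diagonal_sub,
    Matrix.posSemidef_diagonal_iff]
  exact fun j => sub_nonneg.mpr (hc j j.isLt)

end PeriodicRestriction

section CircleLift

lemma exists_circleDeg1Lift_coe_eq_pow {T : Equiv.Perm ℝ} (hT : Monotone T)
    (hTper : ∀ t, T (t + 1) = T t + 1) (j : ℕ) : ∃ g : CircleDeg1Lift, ⇑g = ⇑(T ^ j) := by
  let g : CircleDeg1Lift := ⟨⟨T, hT⟩, hTper⟩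
  exact ⟨g ^ j, by rw [CircleDeg1Lift.coe_pow, Equiv.Perm.coe_pow]; rfl⟩

lemma measure_Icc_map_of_strictMono {α : Type*} [LinearOrder α] [TopologicalSpace α]
    [OrderClosedTopology α] [MeasurableSpace α] [OpensMeasurableSpace α] {ν : Measure α}
    {g : α → α} (hg : StrictMono g) (hgν : MeasurePreserving g ν ν) (x y : α) :
    ν (Set.Icc (g x) (g y)) = ν (Set.Icc x y) := by
  rw [← hgν.measure_preimage measurableSet_Icc.nullMeasurableSet]
  exact congrArg ν ((OrderEmbedding.ofStrictMono g hg).preimage_Icc x y)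

variable {g : CircleDeg1Lift} {x y : ℝ}

lemma floor_map_eq_of_fract_notMem_Ioc (hg : StrictMono g) {s : ℝ} (hs : g s = 0) (hx : 0 ≤ x)
    (hxy : x ≤ y) (hy : y < 1) (hsxy : Int.fract s ∉ Set.Ioc x y) : ⌊g x⌋ = ⌊g y⌋ := by
  by_contra hne
  have hlt : ⌊g x⌋ < ⌊g y⌋ := lt_of_le_of_ne (Int.floor_le_floor (g.mono hxy)) hne
  have hgs : g (s + ⌊g y⌋) = ⌊g y⌋ := by rw [g.map_add_int, hs, zero_add]
  have hmem : s + ⌊g y⌋ ∈ Set.Ioc x y := by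
    rw [Set.mem_Ioc, ← hg.lt_iff_lt, ← hg.le_iff_le (b := y), hgs]
    exact ⟨Int.floor_lt.mp hlt, Int.floor_le _⟩
  have hfract : Int.fract s = s + ⌊g y⌋ := by
    rw [← Int.fract_add_intCast s ⌊g y⌋]
    exact Int.fract_eq_self.mpr ⟨hx.trans hmem.1.le, hmem.2.trans_lt hy⟩
  exact hsxy (hfract ▸ hmem)

variable {f : ℝ → ℝ} {γm γp : ℝ}

lemma sub_bounds_of_floor_eq (hfper : Function.Periodic f 1)
    (hfLip : ∀ u v : ℝ, 0 ≤ u → u < v → v < 1 →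
      γm * (v - u) ≤ f v - f u ∧ f v - f u ≤ γp * (v - u))
    {u v : ℝ} (huv : u < v) (hfloor : ⌊u⌋ = ⌊v⌋) :
    γm * (v - u) ≤ f v - f u ∧ f v - f u ≤ γp * (v - u) := by
  have hfract (t : ℝ) : f (Int.fract t) = f t := by
    simpa using hfper.sub_int_mul_eq (x := t) ⌊t⌋
  have hsub : Int.fract v - Int.fract u = v - u := by
    rw [Int.fract, Int.fract, hfloor, sub_sub_sub_cancel_right]
  have hlt : Int.fract u < Int.fract v := sub_pos.mp (hsub ▸ sub_pos.mpr huv)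
  simpa only [hsub, hfract] using hfLip _ _ (Int.fract_nonneg u) hlt (Int.fract_lt_one v)

lemma sub_map_bounds_of_floor_map_eq {ν : Measure ℝ} {Cm Cp : ℝ} (hγm : 0 ≤ γm) (hγp : 0 ≤ γp)
    (hfper : Function.Periodic f 1)
    (hfLip : ∀ u v : ℝ, 0 ≤ u → u < v → v < 1 →
      γm * (v - u) ≤ f v - f u ∧ f v - f u ≤ γp * (v - u))
    (hcomp : ∀ u v : ℝ, u ≤ v → v ≤ u + 1 →
      Cm * (ν (Set.Icc u v)).toReal ≤ v - u ∧ v - u ≤ Cp * (ν (Set.Icc u v)).toReal)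
    (hg : StrictMono g) (hgν : MeasurePreserving g ν ν) (hxy : x < y)
    (hfloor : ⌊g x⌋ = ⌊g y⌋) :
    γm * (Cm * (ν (Set.Icc x y)).toReal) ≤ f (g y) - f (g x) ∧
      f (g y) - f (g x) ≤ γp * (Cp * (ν (Set.Icc x y)).toReal) := by
  obtain ⟨hf_lower, hf_upper⟩ := sub_bounds_of_floor_eq hfper hfLip (hg hxy) hfloor
  have hlen : g y ≤ g x + 1 := by
    linarith [Int.abs_sub_lt_one_of_floor_eq_floor hfloor, neg_abs_le (g x - g y)]
  obtain ⟨hν_lower, hν_upper⟩ := hcomp _ _ (g.mono hxy.le) hlen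
  rw [measure_Icc_map_of_strictMono hg hgν] at hν_lower hν_upper
  exact ⟨(mul_le_mul_of_nonneg_left hν_lower hγm).trans hf_lower,
    hf_upper.trans (mul_le_mul_of_nonneg_left hν_upper hγp)⟩

end CircleLift

theorem eigenvalue_biLipschitz_general
    {f : ℝ → ℝ} {T : Equiv.Perm ℝ} {ν : Measure ℝ} {γm γp Cm Cp lam : ℝ} {n : ℕ}
    (hγm : 0 ≤ γm) (hγp : 0 ≤ γp) (hlam : 0 ≤ lam) (hfper : Function.Periodic f 1)
    (hfLip : ∀ u v : ℝ, 0 ≤ u → u < v → v < 1 →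
      γm * (v - u) ≤ f v - f u ∧ f v - f u ≤ γp * (v - u))
    (hTmono : StrictMono T) (hTper : ∀ t, T (t + 1) = T t + 1) (hTν : MeasurePreserving T ν ν)
    (hcomp : ∀ u v : ℝ, u ≤ v → v ≤ u + 1 →
      Cm * (ν (Set.Icc u v)).toReal ≤ v - u ∧ v - u ≤ Cp * (ν (Set.Icc u v)).toReal)
    {x y : ℝ} (hx : 0 ≤ x) (hxy : x < y) (hy : y < 1)
    (hcont : ∀ j < n, Int.fract ((T ^ (-(j : ℤ))) 0) ∉ Set.Ioc x y)
    {a b : Fin n → ℝ}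
    (ha : (HPer lam f T x n).charpoly = ∏ i, (X - C (a i))) (ha_mono : Monotone a)
    (hb : (HPer lam f T y n).charpoly = ∏ i, (X - C (b i))) (hb_mono : Monotone b) (i : Fin n) :
    lam * γm * Cm * (ν (Set.Icc x y)).toReal ≤ b i - a i ∧
      b i - a i ≤ lam * γp * Cp * (ν (Set.Icc x y)).toReal := by
  have hpotential (j : ℕ) (hj : j < n) :
      γm * (Cm * (ν (Set.Icc x y)).toReal) ≤ f ((T ^ j) y) - f ((T ^ j) x) ∧
        f ((T ^ j) y) - f ((T ^ j) x) ≤ γp * (Cp * (ν (Set.Icc x y)).toReal) := by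
    obtain ⟨g, hgT⟩ := exists_circleDeg1Lift_coe_eq_pow hTmono.monotone hTper j
    have hg_iterate : ⇑g = T^[j] := hgT.trans (Equiv.Perm.coe_pow T j)
    have hg : StrictMono g := hg_iterate ▸ hTmono.iterate j
    have hfloor : ⌊g x⌋ = ⌊g y⌋ :=
      floor_map_eq_of_fract_notMem_Ioc hg (by simp [hgT]) hx hxy.le hy (hcont j hj)
    rw [← hgT]
    exact sub_map_bounds_of_floor_map_eq hγm hγp hfper hfLip hcomp hg
      (hg_iterate ▸ hTν.iterate j) hxy hfloor
  have hlower := HPer_eigenvalue_add_le ha ha_mono hb hb_mono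
    (fun j hj => mul_le_mul_of_nonneg_left (hpotential j hj).1 hlam) i
  -- The upper bound is Weyl's lower bound for the reversed increment from `y` to `x`.
  have hupper := HPer_eigenvalue_add_le hb hb_mono ha ha_mono
    (c := -(lam * (γp * (Cp * (ν (Set.Icc x y)).toReal))))
    (fun j hj => by linarith [mul_le_mul_of_nonneg_left (hpotential j hj).2 hlam]) i
  constructor <;> linarith

/-- On each continuity interval the box eigenvalue functions are
bi-Lipschitz monotone with respect to the invariant measure:
`λ γ₋ C₋ ν([x,y]) ≤ μ̃_i(y) − μ̃_i(x) ≤ λ γ₊ C₊ ν([x,y])`. -/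
theorem eigenvalue_biLipschitz
    (f : ℝ → ℝ) (T : Equiv.Perm ℝ) (ν : Measure ℝ)
    (γm γp Cm Cp lam α : ℝ) (n : ℕ) (μ : ℝ → Fin n → ℝ)
    (hγm : 0 < γm) (hγp : 0 < γp) (hlam : 0 < lam)
    (hfper : ∀ t : ℝ, f (t + 1) = f t) (hf0 : f 0 = 0)
    (hf1 : Filter.Tendsto f (nhdsWithin 1 (Set.Iio 1)) (nhds 1))
    (hfLip : ∀ u v : ℝ, 0 ≤ u → u < v → v < 1 →
      γm * (v - u) ≤ f v - f u ∧ f v - f u ≤ γp * (v - u))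
    (hTmono : StrictMono ⇑T) (hTper : ∀ t : ℝ, T (t + 1) = T t + 1)
    (hαirr : Irrational α)
    (hrot : Filter.Tendsto (fun m : ℕ => (T ^ m) 0 / (m : ℝ)) Filter.atTop (nhds α))
    (hCm : 0 < Cm) (hCp : 0 < Cp)
    (hνprob : ν (Set.Ico (0 : ℝ) 1) = 1)
    (hνinv : MeasureTheory.Measure.map (⇑T) ν = ν)
    (hνper : MeasureTheory.Measure.map (fun t : ℝ => t + 1) ν = ν)
    (hcomp : ∀ u v : ℝ, u ≤ v → v ≤ u + 1 →
      Cm * (ν (Set.Icc u v)).toReal ≤ v - u ∧ v - u ≤ Cp * (ν (Set.Icc u v)).toReal)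
    (hμmono : ∀ z : ℝ, Monotone (μ z))
    (hμeig : ∀ z : ℝ, (HPer lam f T z n).charpoly = ∏ i, (X - Polynomial.C (μ z i)))
    (x y : ℝ) (hx : 0 ≤ x) (hxy : x < y) (hy : y < 1)
    (hcont : ∀ j < n, Int.fract ((T ^ (-(j : ℤ))) 0) ∉ Set.Ioc x y)
    (i : Fin n) :
    lam * γm * Cm * (ν (Set.Icc x y)).toReal ≤ μ y i - μ x i ∧
    μ y i - μ x i ≤ lam * γp * Cp * (ν (Set.Icc x y)).toReal := by
  exact eigenvalue_biLipschitz_general hγm.le hγp.le hlam.le hfper hfLip hTmono hTper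
    ⟨hTmono.monotone.measurable, hνinv⟩ hcomp hx hxy hy hcont (hμeig x) (hμmono x) (hμeig y)
    (hμmono y) i
end
end

section
/- Let Ñ_n(x,E) = #{ i : μ̃_i(x) ≤ E } count the eigenvalues of the periodic restriction H̃_n(x) that are at most E, and assume that for every E the integrated density of states N(E) = lim_{n→∞} (1/n) ∫ Ñ_n(x,E) dν(x) exists. Then N is Lipschitz continuous with constant 1/(λγ₋C₋): for all E, E′ ∈ ℝ, |N(E) − N(E′)| ≤ |E − E′|/(λ·γ₋·C₋). -/
/-!
Parametrising the line by `ν`-mass through the quantile function of `ν` turns `T` into a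
translation by some `ρ` and `ν` into Lebesgue measure, and the potential into a `1`-periodic
sawtooth `W` that grows at rate at least `L = λ γ₋ C₋` between its drops at the integers.

Let `E ≤ E'` and `s = (E' - E) / L`. Moving `t` to `t + s` raises the diagonal entry `W (t + j ρ)`
by at least `E' - E`, unless an integer lies in `(t + j ρ, t + j ρ + s]`. Each such exceptional site
changes the eigenvalue count by at most one, by counting dimensions for Sylvester's signature, so
`#{eigenvalues at t + s ≤ E'} ≤ #{eigenvalues at t ≤ E} + #{exceptional sites}`.
Averaged over a period of `t`, the shift by `s` disappears and each site is exceptional with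
frequency at most `s`. Hence the averaged count grows by at most `n s`, before any limit is taken.
-/

open MeasureTheory Polynomial Filter

noncomputable section

attribute [local instance] Matrix.normedAddCommGroup

open QuadraticMap

/-! ### Eigenvalue counting -/

section EigenvalueCount

variable {ι : Type*} [Fintype ι] [DecidableEq ι]

/-- The eigenvalue counting function of a real matrix: the number of real roots of the
characteristic polynomial in `(-∞, E]`, counted with multiplicity. -/
def eigenvalueCount (A : Matrix ι ι ℝ) (E : ℝ) : ℕ :=
  A.charpoly.roots.countP (· ≤ E)

lemma eigenvalueCount_eq_card_filter {A : Matrix ι ι ℝ} {e : ι → ℝ}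
    (he : A.charpoly = ∏ i, (X - C (e i))) (E : ℝ) :
    eigenvalueCount A E = (Finset.univ.filter fun i => e i ≤ E).card := by
  have hroots : A.charpoly.roots = Finset.univ.val.map e := by
    rw [he]
    simpa using roots_multiset_prod_X_sub_C (Finset.univ.val.map e)
  rw [eigenvalueCount, hroots, Multiset.countP_map]
  rfl

lemma eigenvalueCount_mono (A : Matrix ι ι ℝ) : Monotone (eigenvalueCount A) := fun E E' hE => by
  simp only [eigenvalueCount, Multiset.countP_eq_card_filter]
  exact Multiset.card_le_card (Multiset.monotone_filter_right _ fun _ ht => ht.trans hE)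

lemma eigenvalueCount_le_card (A : Matrix ι ι ℝ) (E : ℝ) :
    eigenvalueCount A E ≤ Fintype.card ι :=
  calc eigenvalueCount A E ≤ A.charpoly.roots.card := Multiset.countP_le_card _ _
    _ ≤ A.charpoly.natDegree := card_roots' _
    _ = Fintype.card ι := A.charpoly_natDegree_eq_dim

lemma eventually_eigenvalueCount_eq (A : Matrix ι ι ℝ) (E : ℝ) :
    ∀ᶠ E' in nhdsWithin E (Set.Ioi E), eigenvalueCount A E' = eigenvalueCount A E := by
  have no_new_root : ∀ᶠ E' in nhdsWithin E (Set.Ioi E),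
      ∀ t ∈ A.charpoly.roots.toFinset, t ≤ E' → t ≤ E := by
    rw [eventually_all_finset]
    intro t _
    rcases le_or_gt t E with ht | ht
    · exact .of_forall fun _ _ => ht
    · filter_upwards [nhdsWithin_le_nhds (Iio_mem_nhds ht)] with E' hE' hle
      exact absurd hle (not_le.2 hE')
  filter_upwards [no_new_root, self_mem_nhdsWithin] with E' hroots hE
  refine Multiset.countP_congr rfl fun t ht => propext ⟨?_, fun h => h.trans (le_of_lt hE)⟩
  exact hroots t (Multiset.mem_toFinset.2 ht)

lemma toQuadraticForm'_apply {R : Type*} [CommRing R] (A : Matrix ι ι R) (v : ι → R) :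
    A.toQuadraticForm' v = v ⬝ᵥ A.mulVec v :=
  Matrix.toLinearMap₂'_apply' A v v

lemma toQuadraticForm'_sub_smul_one_equivalent {A : Matrix ι ι ℝ} (hA : A.IsHermitian) (E : ℝ) :
    (A - E • (1 : Matrix ι ι ℝ)).toQuadraticForm'.Equivalent
      (weightedSumSquares ℝ fun i => hA.eigenvalues i - E) := by
  let b := hA.eigenvectorBasis
  let coords : (ι → ℝ) ≃ₗ[ℝ] (ι → ℝ) :=
    (WithLp.linearEquiv 2 ℝ (ι → ℝ)).symm ≪≫ₗ b.repr.toLinearEquiv ≪≫ₗ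
      WithLp.linearEquiv 2 ℝ (ι → ℝ)
  have coords_apply (v : ι → ℝ) (i : ι) : coords v i = (b i).ofLp ⬝ᵥ v := by
    simp [coords, b.repr_apply_apply, EuclideanSpace.inner_eq_star_dotProduct, dotProduct_comm]
  have parseval (v w : ι → ℝ) : v ⬝ᵥ w = ∑ i, coords v i * coords w i := by
    have := b.sum_inner_mul_inner (WithLp.toLp 2 v) (WithLp.toLp 2 w)
    simp only [EuclideanSpace.inner_eq_star_dotProduct, star_trivial] at this
    simp only [coords_apply, dotProduct_comm v w, ← this, dotProduct_comm w]
  have coords_mulVec (v : ι → ℝ) (i : ι) :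
      coords (A.mulVec v) i = hA.eigenvalues i * coords v i := by
    rw [coords_apply, coords_apply, Matrix.dotProduct_mulVec, ← Matrix.mulVec_transpose,
      (Matrix.conjTranspose_eq_transpose_of_trivial A).symm.trans hA, hA.mulVec_eigenvectorBasis,
      smul_dotProduct, smul_eq_mul]
  refine ⟨coords, fun v => ?_⟩
  symm
  calc (A - E • (1 : Matrix ι ι ℝ)).toQuadraticForm' v
      = v ⬝ᵥ A.mulVec v - E * (v ⬝ᵥ v) := by
        simp only [toQuadraticForm'_apply, Matrix.sub_mulVec, Matrix.smul_mulVec,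
          Matrix.one_mulVec, dotProduct_sub, dotProduct_smul, smul_eq_mul]
    _ = ∑ i, (hA.eigenvalues i - E) * (coords v i * coords v i) := by
        simp only [parseval, coords_mulVec, Finset.mul_sum, ← Finset.sum_sub_distrib]
        exact Finset.sum_congr rfl fun i _ => by ring
    _ = weightedSumSquares ℝ (fun i => hA.eigenvalues i - E) (coords v) := by
        simp only [weightedSumSquares_apply, smul_eq_mul]

lemma eigenvalueCount_add_sigPos {A : Matrix ι ι ℝ} (hA : A.IsHermitian) (E : ℝ) :
    eigenvalueCount A E + sigPos (A - E • (1 : Matrix ι ι ℝ)).toQuadraticForm' =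
      Fintype.card ι := by
  have hcharpoly : A.charpoly = ∏ i, (X - C (hA.eigenvalues i)) := by simpa using hA.charpoly_eq
  rw [eigenvalueCount_eq_card_filter hcharpoly, QuadraticForm.sigPos_of_equiv_weightedSumSquares
    (toQuadraticForm'_sub_smul_one_equivalent hA E)]
  have hpos : {i | 0 < hA.eigenvalues i - E}.ncard =
      (Finset.univ.filter fun i => ¬ hA.eigenvalues i ≤ E).card := by
    simp [← Set.ncard_coe_finset]
  rw [hpos, Finset.card_filter_add_card_filter_not, Finset.card_univ]

end EigenvalueCount

lemma sigPos_add_finrank_le_of_le_on {K M : Type*} [Field K] [LinearOrder K] [AddCommGroup M]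
    [Module K M] [FiniteDimensional K M] {Q Q' : QuadraticForm K M} {W : Submodule K M}
    (hQ : ∀ v ∈ W, Q v ≤ Q' v) :
    sigPos Q + Module.finrank K W ≤ sigPos Q' + Module.finrank K M := by
  obtain ⟨V, hVrank, hVpos⟩ := exists_finrank_eq_sigPos_and_posDef Q
  have hpos : (Q'.restrict (V ⊓ W)).PosDef := fun v hv =>
    (hVpos ⟨v, v.2.1⟩ (by simpa using hv)).trans_le (hQ v v.2.2)
  calc sigPos Q + Module.finrank K W
      = Module.finrank K ↥(V ⊔ W) + Module.finrank K ↥(V ⊓ W) := by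
        rw [← hVrank, Submodule.finrank_sup_add_finrank_inf_eq]
    _ ≤ Module.finrank K M + sigPos Q' :=
        add_le_add (Submodule.finrank_le _) (le_sigPos_of_posDef Q' hpos)
    _ = sigPos Q' + Module.finrank K M := add_comm _ _

section DiagonalPerturbation

variable {ι : Type*} [Fintype ι] [DecidableEq ι] {B : Matrix ι ι ℝ}

lemma toQuadraticForm'_add_diagonal_sub_smul_one (B : Matrix ι ι ℝ) (d v : ι → ℝ) (E : ℝ) :
    (B + Matrix.diagonal d - E • (1 : Matrix ι ι ℝ)).toQuadraticForm' v =
      v ⬝ᵥ B.mulVec v + ∑ i, (d i - E) * v i ^ 2 := by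
  rw [toQuadraticForm'_apply, add_sub_assoc, Matrix.smul_one_eq_diagonal, Matrix.diagonal_sub,
    Matrix.add_mulVec, dotProduct_add, dotProduct, dotProduct]
  simp only [Matrix.mulVec_diagonal]
  congr 1
  exact Finset.sum_congr rfl fun i _ => by ring

lemma eigenvalueCount_add_diagonal_le (hB : B.IsHermitian) {d d' : ι → ℝ} (S : Finset ι)
    (E δ : ℝ) (hd : ∀ i ∉ S, d i + δ ≤ d' i) :
    eigenvalueCount (B + Matrix.diagonal d') (E + δ) ≤
      eigenvalueCount (B + Matrix.diagonal d) E + S.card := by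
  have form_le : ∀ v ∈ Pi.spanSubset ℝ (↑S : Set ι)ᶜ,
      (B + Matrix.diagonal d - E • (1 : Matrix ι ι ℝ)).toQuadraticForm' v ≤
        (B + Matrix.diagonal d' - (E + δ) • (1 : Matrix ι ι ℝ)).toQuadraticForm' v := by
    intro v hv
    simp only [toQuadraticForm'_add_diagonal_sub_smul_one]
    refine add_le_add le_rfl (Finset.sum_le_sum fun i _ => ?_)
    by_cases hi : i ∈ S
    · simp [Pi.mem_spanSubset_iff.1 hv i (by simpa using hi)]
    · exact mul_le_mul_of_nonneg_right (by linarith [hd i hi]) (sq_nonneg _)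
  have hsig := sigPos_add_finrank_le_of_le_on form_le
  have hcount (d : ι → ℝ) (E : ℝ) :=
    eigenvalueCount_add_sigPos (hB.add (Matrix.isHermitian_diagonal d)) E
  have hS := Set.ncard_add_ncard_compl (↑S : Set ι)
  rw [Set.ncard_coe_finset, Nat.card_eq_fintype_card] at hS
  rw [Pi.dim_spanSubset, Module.finrank_fintype_fun_eq_card] at hsig
  linarith [hcount d E, hcount d' (E + δ)]

/- Lowering the diagonal by at most `ε` acts like raising the energy by `ε`, and the count is
right-continuous in the energy. -/
lemma upperSemicontinuous_eigenvalueCount_add_diagonal (hB : B.IsHermitian) (E : ℝ) :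
    UpperSemicontinuous fun d : ι → ℝ => eigenvalueCount (B + Matrix.diagonal d) E := by
  intro d k hk
  obtain ⟨E', hcount, hE⟩ :=
    ((eventually_eigenvalueCount_eq (B + Matrix.diagonal d) E).and self_mem_nhdsWithin).exists
  have hnear : ∀ᶠ d' in nhds d, ∀ i, d i - (E' - E) < d' i :=
    eventually_all.2 fun i => (continuous_apply i).continuousAt.eventually
      (Ioi_mem_nhds (sub_lt_self _ (sub_pos.2 hE)))
  filter_upwards [hnear] with d' hd'
  calc eigenvalueCount (B + Matrix.diagonal d') E
      = eigenvalueCount (B + Matrix.diagonal d') (E' + (E - E')) := by rw [add_sub_cancel]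
    _ ≤ eigenvalueCount (B + Matrix.diagonal d) E' := by
      simpa using eigenvalueCount_add_diagonal_le hB ∅ E' (E - E')
        fun i _ => by linarith [hd' i]
    _ < k := hcount ▸ hk

lemma measurable_eigenvalueCount_add_diagonal {α : Type*} [MeasurableSpace α]
    (hB : B.IsHermitian) (E : ℝ) {d : α → ι → ℝ} (hd : Measurable d) :
    Measurable fun x => (eigenvalueCount (B + Matrix.diagonal (d x)) E : ℝ) :=
  measurable_from_top.comp
    ((upperSemicontinuous_eigenvalueCount_add_diagonal hB E).measurable.comp hd)

end DiagonalPerturbation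

/-! ### Sawtooth potentials along translations -/

lemma periodic_one_apply_fract {β : Type*} {V : ℝ → β} (hV : Function.Periodic V 1) (t : ℝ) :
    V (Int.fract t) = V t := by
  simpa only [mul_one, Int.self_sub_floor] using hV.sub_int_mul_eq (x := t) ⌊t⌋

/-- A sawtooth of slope at least `κ`: a `1`-periodic function that grows at rate at least `κ` on
each cell `[n, n + 1)`, `n ∈ ℤ`, the points of a common cell being those with equal floors. It
may drop only at the integers. -/
structure IsSawtooth (κ : ℝ) (V : ℝ → ℝ) : Prop where
  periodic : Function.Periodic V 1
  mul_sub_le : ∀ ⦃u v : ℝ⦄, u ≤ v → ⌊u⌋ = ⌊v⌋ → κ * (v - u) ≤ V v - V u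

namespace IsSawtooth

variable {κ : ℝ} {V : ℝ → ℝ}

lemma of_forall_Ico (hper : Function.Periodic V 1)
    (hV : ∀ u v : ℝ, 0 ≤ u → u < v → v < 1 → κ * (v - u) ≤ V v - V u) : IsSawtooth κ V := by
  refine ⟨hper, fun u v huv hfloor => ?_⟩
  rcases huv.eq_or_lt with rfl | huv
  · simp
  have hsub : Int.fract v - Int.fract u = v - u := by
    rw [Int.fract, Int.fract, hfloor, sub_sub_sub_cancel_right]
  simpa only [hsub, periodic_one_apply_fract hper] using
    hV (Int.fract u) (Int.fract v) (Int.fract_nonneg u)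
    (sub_pos.1 (hsub ▸ sub_pos.2 huv)) (Int.fract_lt_one v)

lemma const_mul (hV : IsSawtooth κ V) {a : ℝ} (ha : 0 ≤ a) :
    IsSawtooth (a * κ) fun t => a * V t where
  periodic t := congrArg (a * ·) (hV.periodic t)
  mul_sub_le u v huv hfloor := by
    rw [mul_assoc, ← mul_sub]
    exact mul_le_mul_of_nonneg_left (hV.mul_sub_le huv hfloor) ha

lemma measurable (hV : IsSawtooth κ V) (hκ : 0 ≤ κ) : Measurable V := by
  have hmono : Monotone fun t : Set.Ico (0 : ℝ) 1 => V t := fun u v huv => by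
    have hfloor : ⌊(u : ℝ)⌋ = ⌊(v : ℝ)⌋ :=
      (Int.floor_eq_zero_iff.2 u.2).trans (Int.floor_eq_zero_iff.2 v.2).symm
    exact sub_nonneg.1 ((mul_nonneg hκ (sub_nonneg.2 huv)).trans (hV.mul_sub_le huv hfloor))
  rw [← funext (periodic_one_apply_fract hV.periodic)]
  exact hmono.measurable.comp
    (measurable_fract.subtype_mk (h := fun t => ⟨Int.fract_nonneg t, Int.fract_lt_one t⟩))

end IsSawtooth

lemma integral_comp_add_right_of_periodic {F : Type*} [NormedAddCommGroup F] [NormedSpace ℝ F]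
    {g : ℝ → F} {p : ℝ} (hg : Function.Periodic g p) (c : ℝ) :
    ∫ t in (0 : ℝ)..p, g (t + c) = ∫ t in (0 : ℝ)..p, g t := by
  rw [intervalIntegral.integral_comp_add_right g, zero_add, add_comm p c]
  simpa using hg.intervalIntegral_add_eq c 0

lemma intervalIntegrable_of_norm_le {F : Type*} [NormedAddCommGroup F] {ν : Measure ℝ}
    [IsLocallyFiniteMeasure ν] {g : ℝ → F} (hg : AEStronglyMeasurable g ν) {M : ℝ}
    (hM : ∀ t, ‖g t‖ ≤ M) (a b : ℝ) : IntervalIntegrable g ν a b :=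
  (intervalIntegrable_const (c := M)).mono_fun' hg.restrict (.of_forall hM)

/-- The number of integers in `(t, t + s]`, for `0 ≤ s`. It is real-valued because it is averaged
over `t`. -/
def integerCrossings (s t : ℝ) : ℝ := ⌊t + s⌋ - ⌊t⌋

lemma integerCrossings_eq (s t : ℝ) :
    integerCrossings s t = s - (Int.fract (t + s) - Int.fract t) := by
  rw [integerCrossings, Int.fract, Int.fract]
  ring

lemma intervalIntegrable_fract_add (c a b : ℝ) :
    IntervalIntegrable (fun t : ℝ => Int.fract (t + c)) volume a b := by
  refine intervalIntegrable_of_norm_le (M := 1)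
    (Measurable.aestronglyMeasurable (by fun_prop)) (fun t => ?_) a b
  rw [Real.norm_of_nonneg (Int.fract_nonneg _)]
  exact (Int.fract_lt_one _).le

lemma intervalIntegrable_integerCrossings (s c a b : ℝ) :
    IntervalIntegrable (fun t => integerCrossings s (t + c)) volume a b := by
  simp only [integerCrossings_eq, add_assoc]
  exact intervalIntegrable_const.sub
    ((intervalIntegrable_fract_add _ _ _).sub (intervalIntegrable_fract_add _ _ _))

lemma integral_integerCrossings (s c : ℝ) :
    ∫ t in (0 : ℝ)..1, integerCrossings s (t + c) = s := by
  have hfract (a : ℝ) : IntervalIntegrable (fun t : ℝ => Int.fract (t + a)) volume 0 1 :=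
    intervalIntegrable_fract_add a 0 1
  have hmean (a : ℝ) := integral_comp_add_right_of_periodic (Int.fract_add_one (R := ℝ)) a
  simp only [integerCrossings_eq, add_assoc]
  rw [intervalIntegral.integral_sub intervalIntegrable_const ((hfract _).sub (hfract _)),
    intervalIntegral.integral_sub (hfract _) (hfract _), hmean, hmean]
  simp

lemma ite_floor_ne_le_integerCrossings {s : ℝ} (hs : 0 ≤ s) (t : ℝ) :
    (if ⌊t⌋ ≠ ⌊t + s⌋ then (1 : ℝ) else 0) ≤ integerCrossings s t := by
  have hle : ⌊t⌋ ≤ ⌊t + s⌋ := Int.floor_mono (le_add_of_nonneg_right hs)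
  rw [integerCrossings]
  split_ifs with hne
  · exact_mod_cast Int.le_sub_left_of_add_le (lt_of_le_of_ne hle hne)
  · exact_mod_cast sub_nonneg.2 hle

section SawtoothDiagonal

variable {ι : Type*} [Fintype ι] [DecidableEq ι] {B : Matrix ι ι ℝ} {κ : ℝ} {V : ℝ → ℝ}

lemma eigenvalueCount_sawtooth_add_le (hB : B.IsHermitian) (hV : IsSawtooth κ V) {s : ℝ}
    (hs : 0 ≤ s) (x : ι → ℝ) (E : ℝ) :
    (eigenvalueCount (B + Matrix.diagonal fun i => V (x i + s)) (E + κ * s) : ℝ) ≤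
      eigenvalueCount (B + Matrix.diagonal fun i => V (x i)) E +
        ∑ i, integerCrossings s (x i) := by
  let S : Finset ι := Finset.univ.filter fun i => ⌊x i⌋ ≠ ⌊x i + s⌋
  have hgrow : ∀ i ∉ S, V (x i) + κ * s ≤ V (x i + s) := fun i hi => by
    have hfloor : ⌊x i⌋ = ⌊x i + s⌋ := by simpa [S] using hi
    have := hV.mul_sub_le (le_add_of_nonneg_right hs) hfloor
    rw [add_sub_cancel_left] at this
    linarith
  have hcard : (S.card : ℝ) ≤ ∑ i, integerCrossings s (x i) := by
    rw [Finset.card_filter, Nat.cast_sum]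
    refine Finset.sum_le_sum fun i _ => ?_
    exact_mod_cast ite_floor_ne_le_integerCrossings hs (x i)
  calc (eigenvalueCount (B + Matrix.diagonal fun i => V (x i + s)) (E + κ * s) : ℝ)
      ≤ eigenvalueCount (B + Matrix.diagonal fun i => V (x i)) E + S.card := by
        exact_mod_cast eigenvalueCount_add_diagonal_le hB S E (κ * s) hgrow
    _ ≤ _ := add_le_add le_rfl hcard

lemma intervalIntegrable_eigenvalueCount (hB : B.IsHermitian) (hV : Measurable V) (c : ι → ℝ)
    (E a b : ℝ) :
    IntervalIntegrable
      (fun t => (eigenvalueCount (B + Matrix.diagonal fun i => V (t + c i)) E : ℝ))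
      volume a b := by
  have hdiag : Measurable fun (t : ℝ) (i : ι) => V (t + c i) :=
    measurable_pi_lambda _ fun i => hV.comp (measurable_id.add_const (c i))
  refine intervalIntegrable_of_norm_le (M := Fintype.card ι)
    (measurable_eigenvalueCount_add_diagonal hB E hdiag).aestronglyMeasurable (fun t => ?_) a b
  rw [Real.norm_natCast]
  exact_mod_cast eigenvalueCount_le_card _ E

lemma integral_eigenvalueCount_sawtooth_le (hB : B.IsHermitian) (hV : IsSawtooth κ V)
    (hκ : 0 < κ) (c : ι → ℝ) {E E' : ℝ} (hE : E ≤ E') :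
    ∫ t in (0 : ℝ)..1, (eigenvalueCount (B + Matrix.diagonal fun i => V (t + c i)) E' : ℝ) ≤
      (∫ t in (0 : ℝ)..1, (eigenvalueCount (B + Matrix.diagonal fun i => V (t + c i)) E : ℝ)) +
        Fintype.card ι * ((E' - E) / κ) := by
  set s := (E' - E) / κ
  have hs : 0 ≤ s := div_nonneg (sub_nonneg.2 hE) hκ.le
  have hE' : E + κ * s = E' := by simp only [s]; field_simp; ring
  let k (E t : ℝ) : ℝ := eigenvalueCount (B + Matrix.diagonal fun i => V (t + c i)) E
  have hperiodic : Function.Periodic (k E') 1 := fun t => by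
    simp only [k, add_right_comm t 1, hV.periodic _]
  have hint (E a b : ℝ) : IntervalIntegrable (k E) volume a b :=
    intervalIntegrable_eigenvalueCount hB (hV.measurable hκ.le) c E a b
  have hcross : ∀ i ∈ Finset.univ, IntervalIntegrable
      (fun t => integerCrossings s (t + c i)) volume 0 1 :=
    fun i _ => intervalIntegrable_integerCrossings s (c i) 0 1
  have hsum := IntervalIntegrable.sum _ hcross
  calc ∫ t in (0 : ℝ)..1, k E' t = ∫ t in (0 : ℝ)..1, k E' (t + s) :=
        (integral_comp_add_right_of_periodic hperiodic s).symm
    _ ≤ ∫ t in (0 : ℝ)..1, (k E t + ∑ i, integerCrossings s (t + c i)) := by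
        refine intervalIntegral.integral_mono zero_le_one
          (by simpa using (hint E' (0 + s) (1 + s)).comp_add_right s)
          ((hint E 0 1).add (by simpa only [Finset.sum_fn] using hsum)) fun t => ?_
        simpa only [k, hE', add_right_comm t s] using
          eigenvalueCount_sawtooth_add_le hB hV hs (fun i => t + c i) E
    _ = (∫ t in (0 : ℝ)..1, k E t) + Fintype.card ι * s := by
        rw [intervalIntegral.integral_add (hint E 0 1) (by simpa only [Finset.sum_fn] using hsum),
          intervalIntegral.integral_finsetSum hcross]
        simp only [integral_integerCrossings, Finset.sum_const, Finset.card_univ, nsmul_eq_mul]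

lemma monotone_integral_eigenvalueCount (hB : B.IsHermitian) (hV : Measurable V) (c : ι → ℝ) :
    Monotone fun E => ∫ t in (0 : ℝ)..1,
      (eigenvalueCount (B + Matrix.diagonal fun i => V (t + c i)) E : ℝ) := fun E E' hE =>
  intervalIntegral.integral_mono zero_le_one (intervalIntegrable_eigenvalueCount hB hV c E 0 1)
    (intervalIntegrable_eigenvalueCount hB hV c E' 0 1)
    fun _ => Nat.cast_le.2 (eigenvalueCount_mono _ hE)

lemma abs_integral_eigenvalueCount_sawtooth_sub_le (hB : B.IsHermitian) (hV : IsSawtooth κ V)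
    (hκ : 0 < κ) (c : ι → ℝ) (E E' : ℝ) :
    |(∫ t in (0 : ℝ)..1, (eigenvalueCount (B + Matrix.diagonal fun i => V (t + c i)) E : ℝ)) -
        ∫ t in (0 : ℝ)..1, (eigenvalueCount (B + Matrix.diagonal fun i => V (t + c i)) E' : ℝ)| ≤
      Fintype.card ι * (|E - E'| / κ) := by
  wlog hE : E ≤ E' generalizing E E'
  · rw [abs_sub_comm, abs_sub_comm E]
    exact this E' E (le_of_not_ge hE)
  have hmono := monotone_integral_eigenvalueCount hB (hV.measurable hκ.le) c hE
  rw [abs_of_nonpos (sub_nonpos.2 hmono), abs_of_nonpos (sub_nonpos.2 hE), neg_sub, neg_sub]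
  exact sub_le_iff_le_add'.2 (integral_eigenvalueCount_sawtooth_le hB hV hκ c hE)

end SawtoothDiagonal

/-! ### Straightening a circle measure -/

/-- The lift to `ℝ` of a probability measure on the circle `ℝ/ℤ`: a measure invariant under
`x ↦ x + 1` that gives the fundamental domain `[0, 1)` mass one. -/
class IsCircleLift (ν : Measure ℝ) : Prop where
  measure_Ico_zero_one : ν (Set.Ico 0 1) = 1
  map_add_one : ν.map (· + 1) = ν

lemma measure_Ico_int_add_one (ν : Measure ℝ) [IsCircleLift ν] (n : ℤ) :
    ν (Set.Ico (n : ℝ) (n + 1)) = 1 := by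
  have hperiodic : Function.Periodic (fun a : ℝ => ν (Set.Ico a (a + 1))) 1 := fun a => by
    change ν (Set.Ico (a + 1) (a + 1 + 1)) = ν (Set.Ico a (a + 1))
    conv_lhs => rw [← IsCircleLift.map_add_one (ν := ν)]
    rw [Measure.map_apply (measurable_add_const 1) measurableSet_Ico, Set.preimage_add_const_Ico,
      add_sub_cancel_right, add_sub_cancel_right]
  simpa [IsCircleLift.measure_Ico_zero_one] using hperiodic.int_mul_eq n

instance IsCircleLift.isLocallyFiniteMeasure (ν : Measure ℝ) [IsCircleLift ν] :
    IsLocallyFiniteMeasure ν := by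
  refine ⟨fun x => ⟨Set.Ico ((⌊x⌋ - 1 : ℤ) : ℝ) ⌊x⌋ ∪ Set.Ico (⌊x⌋ : ℝ) (⌊x⌋ + 1), ?_, ?_⟩⟩
  · have hlow : ((⌊x⌋ - 1 : ℤ) : ℝ) ≤ ⌊x⌋ := by exact_mod_cast Int.sub_le_self _ zero_le_one
    rw [Set.Ico_union_Ico_eq_Ico hlow (le_add_of_nonneg_right zero_le_one)]
    refine Ico_mem_nhds ?_ (Int.lt_floor_add_one x)
    push_cast
    linarith [Int.floor_le x]
  · have hleft := measure_Ico_int_add_one ν (⌊x⌋ - 1)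
    rw [Int.cast_sub, Int.cast_one, sub_add_cancel] at hleft
    refine measure_union_lt_top ?_ ?_
    · simp [hleft]
    · simp [measure_Ico_int_add_one ν ⌊x⌋]

lemma nullSingletonClass_of_mul_real_Icc_le {ν : Measure ℝ} [IsLocallyFiniteMeasure ν] {C : ℝ}
    (hC : 0 < C) (hν : ∀ x, C * ν.real (Set.Icc x x) ≤ 0) : NullSingletonClass ν := by
  refine ⟨fun x => ?_⟩
  have hzero : ν.real {x} = 0 := by
    refine le_antisymm (nonpos_of_mul_nonpos_right ?_ hC) measureReal_nonneg
    simpa only [Set.Icc_self] using hν x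
  exact (measureReal_eq_zero_iff isCompact_singleton.measure_lt_top.ne).1 hzero

/-- The distribution function of a measure on `ℝ`, normalised to vanish at `0`: it is
`ν (0, x]` for `0 ≤ x` and `-ν (x, 0]` for `x ≤ 0`. -/
def distributionFunction (ν : Measure ℝ) (x : ℝ) : ℝ := ∫ _ in (0 : ℝ)..x, (1 : ℝ) ∂ν

section DistributionFunction

variable (ν : Measure ℝ)

lemma distributionFunction_zero : distributionFunction ν 0 = 0 := intervalIntegral.integral_same

variable [IsLocallyFiniteMeasure ν]

lemma distributionFunction_sub {x y : ℝ} (hxy : x ≤ y) :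
    distributionFunction ν y - distributionFunction ν x = ν.real (Set.Ioc x y) := by
  rw [distributionFunction, distributionFunction, intervalIntegral.integral_interval_sub_left
    intervalIntegrable_const intervalIntegrable_const, intervalIntegral.integral_const',
    Set.Ioc_eq_empty (not_lt.2 hxy), measureReal_empty, sub_zero, smul_eq_mul, mul_one]

lemma monotone_distributionFunction : Monotone (distributionFunction ν) := fun _ _ hxy =>
  sub_nonneg.1 ((distributionFunction_sub ν hxy).symm ▸ measureReal_nonneg)

lemma continuous_distributionFunction [NullSingletonClass ν] :
    Continuous (distributionFunction ν) :=
  intervalIntegral.continuous_primitive (fun _ _ => intervalIntegrable_const) 0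

variable {ν}

lemma distributionFunction_apply_of_map_eq {S : ℝ → ℝ} (hS : StrictMono S) (hSν : ν.map S = ν)
    (x : ℝ) :
    distributionFunction ν (S x) = distributionFunction ν x + distributionFunction ν (S 0) := by
  have hsub : ∀ x y, x ≤ y → distributionFunction ν (S y) - distributionFunction ν (S x) =
      distributionFunction ν y - distributionFunction ν x := fun x y hxy => by
    have hpreimage : S ⁻¹' Set.Ioc (S x) (S y) = Set.Ioc x y := by
      ext z
      simp only [Set.mem_preimage, Set.mem_Ioc, hS.lt_iff_lt, hS.le_iff_le]
    rw [distributionFunction_sub ν (hS.monotone hxy), distributionFunction_sub ν hxy]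
    conv_lhs => rw [← hSν]
    rw [map_measureReal_apply hS.monotone.measurable measurableSet_Ioc, hpreimage]
  have hzero := distributionFunction_zero ν
  rcases le_total 0 x with hx | hx
  · linarith [hsub 0 x hx]
  · linarith [hsub x 0 hx]

end DistributionFunction

section CircleLift

variable (ν : Measure ℝ) [IsCircleLift ν] [NullSingletonClass ν]

lemma distributionFunction_add_one (x : ℝ) :
    distributionFunction ν (x + 1) = distributionFunction ν x + 1 := by
  have hone : distributionFunction ν 1 = 1 := by
    have hsub := distributionFunction_sub ν zero_le_one
    rwa [distributionFunction_zero, sub_zero, ← measureReal_congr Ico_ae_eq_Ioc, measureReal_def,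
      IsCircleLift.measure_Ico_zero_one, ENNReal.toReal_one] at hsub
  simpa [hone] using
    distributionFunction_apply_of_map_eq (add_left_strictMono (a := (1 : ℝ)))
      (IsCircleLift.map_add_one (ν := ν)) x

lemma distributionFunction_intCast (n : ℤ) : distributionFunction ν n = n := by
  have hperiodic : Function.Periodic (fun x => distributionFunction ν x - x) 1 := fun x => by
    simp only [distributionFunction_add_one, add_sub_add_right_eq_sub]
  have hn := hperiodic.int_mul_eq n
  simp only [mul_one, distributionFunction_zero, sub_zero] at hn
  exact sub_eq_zero.1 hn

lemma surjective_distributionFunction : Function.Surjective (distributionFunction ν) := fun t =>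
  mem_range_of_exists_le_of_exists_ge (continuous_distributionFunction ν)
    ⟨⌊t⌋, (distributionFunction_intCast ν ⌊t⌋).trans_le (Int.floor_le t)⟩
    ⟨⌈t⌉, (Int.le_ceil t).trans_eq (distributionFunction_intCast ν ⌈t⌉).symm⟩

end CircleLift

lemma galoisConnection_sSup_setOf_le {α β : Type*} [ConditionallyCompleteLinearOrder α]
    [TopologicalSpace α] [OrderTopology α] [LinearOrder β] [NoMaxOrder β] [TopologicalSpace β]
    [OrderClosedTopology β] {F : α → β} (hmono : Monotone F) (hcont : Continuous F)
    (hsurj : Function.Surjective F) :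
    GaloisConnection F fun t => sSup {x | F x ≤ t} := by
  intro x t
  have hbdd : BddAbove {x | F x ≤ t} := by
    obtain ⟨t', ht'⟩ := exists_gt t
    obtain ⟨b, rfl⟩ := hsurj t'
    exact ⟨b, fun y hy => (hmono.reflect_lt (lt_of_le_of_lt hy ht')).le⟩
  have hne : {x | F x ≤ t}.Nonempty := (hsurj t).imp fun _ h => h.le
  have hmem : F (sSup {x | F x ≤ t}) ≤ t :=
    (isClosed_le hcont continuous_const).csSup_mem hne hbdd
  exact ⟨fun hx => le_csSup hbdd hx, fun hx => (hmono hx).trans hmem⟩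

/-- The upper quantile function of a measure on `ℝ`. For the lift of an atomless circle measure it
is the right-continuous inverse of the distribution function, and parametrises the line by
`ν`-mass. -/
def quantile (ν : Measure ℝ) (t : ℝ) : ℝ := sSup {x | distributionFunction ν x ≤ t}

section Quantile

variable (ν : Measure ℝ) [IsCircleLift ν] [NullSingletonClass ν]

lemma galoisConnection_distributionFunction_quantile :
    GaloisConnection (distributionFunction ν) (quantile ν) :=
  galoisConnection_sSup_setOf_le (monotone_distributionFunction ν)
    (continuous_distributionFunction ν) (surjective_distributionFunction ν)

lemma le_quantile_iff {x t : ℝ} : x ≤ quantile ν t ↔ distributionFunction ν x ≤ t :=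
  (galoisConnection_distributionFunction_quantile ν x t).symm

lemma monotone_quantile : Monotone (quantile ν) :=
  (galoisConnection_distributionFunction_quantile ν).monotone_u

lemma distributionFunction_quantile (t : ℝ) : distributionFunction ν (quantile ν t) = t := by
  obtain ⟨x, rfl⟩ := surjective_distributionFunction ν t
  exact (galoisConnection_distributionFunction_quantile ν).l_u_l_eq_l x

lemma floor_quantile (t : ℝ) : ⌊quantile ν t⌋ = ⌊t⌋ :=
  eq_of_forall_le_iff fun n => by
    rw [Int.le_floor, Int.le_floor, le_quantile_iff, distributionFunction_intCast]

lemma preimage_quantile_Ico (a b : ℝ) :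
    quantile ν ⁻¹' Set.Ico a b =
      Set.Ico (distributionFunction ν a) (distributionFunction ν b) := by
  ext t
  simp only [Set.mem_preimage, Set.mem_Ico, le_quantile_iff, ← not_le]

lemma measurePreserving_quantile : MeasurePreserving (quantile ν) volume ν := by
  refine ⟨(monotone_quantile ν).measurable, (Measure.ext_of_Ico _ _ fun a b hab => ?_).symm⟩
  rw [Measure.map_apply (monotone_quantile ν).measurable measurableSet_Ico,
    preimage_quantile_Ico, Real.volume_Ico, distributionFunction_sub ν hab.le,
    ← measureReal_congr Ico_ae_eq_Ioc, ofReal_measureReal measure_Ico_lt_top.ne]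

lemma setIntegral_Ico_zero_one_eq_integral_quantile {g : ℝ → ℝ} (hg : Measurable g) :
    ∫ x in Set.Ico 0 1, g x ∂ν = ∫ t in (0 : ℝ)..1, g (quantile ν t) := by
  have hpreimage : quantile ν ⁻¹' Set.Ico 0 1 = Set.Ico 0 1 := by
    rw [preimage_quantile_Ico]
    exact_mod_cast congrArg₂ Set.Ico (distributionFunction_intCast ν 0)
      (distributionFunction_intCast ν 1)
  have hrestrict := (measurePreserving_quantile ν).restrict_preimage
    (measurableSet_Ico (a := (0 : ℝ)) (b := 1))
  rw [← hrestrict.map_eq, integral_map hrestrict.measurable.aemeasurable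
    hg.aestronglyMeasurable, hpreimage, intervalIntegral.integral_of_le zero_le_one,
    integral_Ico_eq_integral_Ioc]

variable {ν}

lemma apply_quantile {S : Equiv.Perm ℝ} (hS : StrictMono S) (hSν : ν.map S = ν) (t : ℝ) :
    S (quantile ν t) = quantile ν (t + distributionFunction ν (S 0)) :=
  eq_of_forall_le_iff fun y => by
    obtain ⟨x, rfl⟩ := S.surjective y
    rw [hS.le_iff_le, le_quantile_iff, le_quantile_iff,
      distributionFunction_apply_of_map_eq hS hSν, add_le_add_iff_right]

lemma pow_apply_quantile {S : Equiv.Perm ℝ} (hS : StrictMono S) (hSν : ν.map S = ν) (j : ℕ)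
    (t : ℝ) :
    (S ^ j) (quantile ν t) = quantile ν (t + j * distributionFunction ν (S 0)) := by
  induction j with
  | zero => simp
  | succ j ih =>
    rw [pow_succ', Equiv.Perm.mul_apply, ih, apply_quantile hS hSν, add_assoc, Nat.cast_succ,
      add_one_mul]

lemma quantile_add_one (t : ℝ) : quantile ν (t + 1) = quantile ν t + 1 := by
  have h := apply_quantile (S := Equiv.addRight (1 : ℝ)) (fun _ _ h => by simpa using h)
    (IsCircleLift.map_add_one (ν := ν)) t
  have hone := distributionFunction_intCast ν 1
  simp only [Int.cast_one] at hone
  simpa [hone] using h.symm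

lemma IsSawtooth.comp_quantile {κ C : ℝ} {V : ℝ → ℝ} (hV : IsSawtooth κ V) (hκ : 0 ≤ κ)
    (hν : ∀ u v : ℝ, u ≤ v → v ≤ u + 1 → C * ν.real (Set.Icc u v) ≤ v - u) :
    IsSawtooth (κ * C) (V ∘ quantile ν) where
  periodic t := by simp only [Function.comp_apply, quantile_add_one, hV.periodic _]
  mul_sub_le s t hst hfloor := by
    have hle : quantile ν s ≤ quantile ν t := monotone_quantile ν hst
    have hfloor' : ⌊quantile ν s⌋ = ⌊quantile ν t⌋ := by simpa only [floor_quantile] using hfloor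
    have hclose : quantile ν t ≤ quantile ν s + 1 := by
      linarith [Int.abs_sub_lt_one_of_floor_eq_floor hfloor',
        neg_abs_le (quantile ν s - quantile ν t)]
    have hmass : ν.real (Set.Icc (quantile ν s) (quantile ν t)) = t - s := by
      rw [← measureReal_congr Ioc_ae_eq_Icc, ← distributionFunction_sub ν hle,
        distributionFunction_quantile, distributionFunction_quantile]
    calc κ * C * (t - s) = κ * (C * ν.real (Set.Icc (quantile ν s) (quantile ν t))) := by
          rw [hmass, mul_assoc]
      _ ≤ κ * (quantile ν t - quantile ν s) := mul_le_mul_of_nonneg_left (hν _ _ hle hclose) hκ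
      _ ≤ V (quantile ν t) - V (quantile ν s) := hV.mul_sub_le hle hfloor'

end Quantile

/-! ### The integrated density of states -/

section FiniteVolume

variable {ι : Type*} [Fintype ι] [DecidableEq ι] {B : Matrix ι ι ℝ} {ν : Measure ℝ}
  [IsCircleLift ν] [NullSingletonClass ν] {V : ℝ → ℝ} {T : Equiv.Perm ℝ}

lemma setIntegral_eigenvalueCount_orbit_eq (hB : B.IsHermitian) (hV : Measurable V)
    (hT : StrictMono T) (hTν : ν.map T = ν) (j : ι → ℕ) (E : ℝ) :
    ∫ x in Set.Ico 0 1,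
        (eigenvalueCount (B + Matrix.diagonal fun i => V ((T ^ j i) x)) E : ℝ) ∂ν =
      ∫ t in (0 : ℝ)..1, (eigenvalueCount (B + Matrix.diagonal fun i =>
        (V ∘ quantile ν) (t + j i * distributionFunction ν (T 0))) E : ℝ) := by
  have hpow (n : ℕ) : Measurable (T ^ n : Equiv.Perm ℝ) := by
    rw [Equiv.Perm.coe_pow]
    exact hT.monotone.measurable.iterate n
  have hdiag : Measurable fun x i => V ((T ^ j i) x) :=
    measurable_pi_lambda _ fun i => hV.comp (hpow (j i))
  rw [setIntegral_Ico_zero_one_eq_integral_quantile ν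
    (measurable_eigenvalueCount_add_diagonal hB E hdiag)]
  simp only [pow_apply_quantile hT hTν, Function.comp_apply]

lemma abs_setIntegral_eigenvalueCount_orbit_sub_le {κ C : ℝ} (hB : B.IsHermitian)
    (hV : IsSawtooth κ V) (hκ : 0 < κ) (hC : 0 < C) (hT : StrictMono T) (hTν : ν.map T = ν)
    (hν : ∀ u v : ℝ, u ≤ v → v ≤ u + 1 → C * ν.real (Set.Icc u v) ≤ v - u) (j : ι → ℕ)
    (E E' : ℝ) :
    |(∫ x in Set.Ico 0 1,
          (eigenvalueCount (B + Matrix.diagonal fun i => V ((T ^ j i) x)) E : ℝ) ∂ν) -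
        ∫ x in Set.Ico 0 1,
          (eigenvalueCount (B + Matrix.diagonal fun i => V ((T ^ j i) x)) E' : ℝ) ∂ν| ≤
      Fintype.card ι * (|E - E'| / (κ * C)) := by
  have hmeas := hV.measurable hκ.le
  rw [setIntegral_eigenvalueCount_orbit_eq hB hmeas hT hTν,
    setIntegral_eigenvalueCount_orbit_eq hB hmeas hT hTν]
  exact abs_integral_eigenvalueCount_sawtooth_sub_le hB (hV.comp_quantile hκ.le hν)
    (mul_pos hκ hC) _ E E'

end FiniteVolume

lemma abs_sub_le_of_tendsto_average {a b : ℕ → ℝ} {x y D : ℝ}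
    (hab : ∀ m : ℕ, |a m - b m| ≤ m * D)
    (ha : Tendsto (fun m : ℕ => 1 / (m : ℝ) * a m) atTop (nhds x))
    (hb : Tendsto (fun m : ℕ => 1 / (m : ℝ) * b m) atTop (nhds y)) : |x - y| ≤ D := by
  refine le_of_tendsto (ha.sub hb).abs ?_
  filter_upwards [eventually_gt_atTop 0] with m hm
  have hm' : (0 : ℝ) < m := Nat.cast_pos.2 hm
  rw [← mul_sub, abs_mul, abs_of_pos (one_div_pos.2 hm'), one_div_mul_eq_div, div_le_iff₀' hm']
  exact hab m

/-- The part of the periodic restriction `HPer` that does not depend on the potential. As in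
`HPer`, the neighbour and corner entries are added, so they overlap for `n = 2`. -/
def hoppingMatrix (n : ℕ) : Matrix (Fin n) (Fin n) ℝ :=
  Matrix.of (fun i j : Fin n =>
    if (i : ℕ) + 1 = (j : ℕ) ∨ (j : ℕ) + 1 = (i : ℕ) then (1 : ℝ) else 0) +
  Matrix.of (fun i j : Fin n =>
    if ((i : ℕ) = 0 ∧ (j : ℕ) = n - 1) ∨ ((i : ℕ) = n - 1 ∧ (j : ℕ) = 0) then (1 : ℝ) else 0)

lemma isHermitian_hoppingMatrix (n : ℕ) : (hoppingMatrix n).IsHermitian := by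
  ext i j
  simp only [hoppingMatrix, Matrix.conjTranspose_apply, Matrix.add_apply, Matrix.of_apply,
    star_trivial]
  congr 1
  · simp only [or_comm]
  · simp only [or_comm, and_comm]

lemma HPer_eq_hoppingMatrix_add_diagonal (lam : ℝ) (f : ℝ → ℝ) (T : Equiv.Perm ℝ) (x : ℝ)
    (n : ℕ) :
    HPer lam f T x n =
      hoppingMatrix n + Matrix.diagonal fun i : Fin n => lam * f ((T ^ (i : ℕ)) x) := by
  ext i j
  simp only [HPer, HDir, hoppingMatrix, Matrix.add_apply, Matrix.of_apply, Matrix.diagonal_apply]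
  ring

theorem IDS_lipschitz_general {κ C : ℝ} {V : ℝ → ℝ} {B : (m : ℕ) → Matrix (Fin m) (Fin m) ℝ}
    {T : Equiv.Perm ℝ} {ν : Measure ℝ} [IsCircleLift ν] {μ : (m : ℕ) → ℝ → Fin m → ℝ}
    {N : ℝ → ℝ} (hV : IsSawtooth κ V) (hκ : 0 < κ) (hC : 0 < C) (hB : ∀ m, (B m).IsHermitian)
    (hT : StrictMono T) (hTν : ν.map T = ν)
    (hν : ∀ u v : ℝ, u ≤ v → v ≤ u + 1 → C * ν.real (Set.Icc u v) ≤ v - u)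
    (hμ : ∀ (m : ℕ) (z : ℝ),
      (B m + Matrix.diagonal fun i : Fin m => V ((T ^ (i : ℕ)) z)).charpoly =
        ∏ i, (X - Polynomial.C (μ m z i)))
    (hN : ∀ E, Tendsto (fun m : ℕ => (1 / (m : ℝ)) * ∫ x in Set.Ico (0 : ℝ) 1,
      ((Finset.univ.filter fun i : Fin m => μ m x i ≤ E).card : ℝ) ∂ν) atTop (nhds (N E)))
    (E E' : ℝ) : |N E - N E'| ≤ |E - E'| / (κ * C) := by
  have : NullSingletonClass ν :=
    nullSingletonClass_of_mul_real_Icc_le hC fun x => by simpa using hν x x le_rfl (by linarith)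
  simp only [← eigenvalueCount_eq_card_filter (hμ _ _)] at hN
  refine abs_sub_le_of_tendsto_average (fun m => ?_) (hN E) (hN E')
  simpa only [Fintype.card_fin] using abs_setIntegral_eigenvalueCount_orbit_sub_le (hB m) hV hκ
    hC hT hTν hν (fun i : Fin m => (i : ℕ)) E E'

/-- Lipschitz continuity of the integrated density of states:
`|N(E) − N(E′)| ≤ |E − E′| / (λγ₋C₋)`. -/
theorem IDS_lipschitz
    (f : ℝ → ℝ) (T : Equiv.Perm ℝ) (ν : Measure ℝ)
    (γm γp Cm Cp lam α : ℝ) (μ : (m : ℕ) → ℝ → Fin m → ℝ) (N : ℝ → ℝ)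
    (hγm : 0 < γm) (hγp : 0 < γp) (hlam : 0 < lam)
    (hfper : ∀ t : ℝ, f (t + 1) = f t) (hf0 : f 0 = 0)
    (hf1 : Filter.Tendsto f (nhdsWithin 1 (Set.Iio 1)) (nhds 1))
    (hfLip : ∀ u v : ℝ, 0 ≤ u → u < v → v < 1 →
      γm * (v - u) ≤ f v - f u ∧ f v - f u ≤ γp * (v - u))
    (hTmono : StrictMono ⇑T) (hTper : ∀ t : ℝ, T (t + 1) = T t + 1)
    (hαirr : Irrational α)
    (hrot : Filter.Tendsto (fun m : ℕ => (T ^ m) 0 / (m : ℝ)) Filter.atTop (nhds α))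
    (hCm : 0 < Cm) (hCp : 0 < Cp)
    (hνprob : ν (Set.Ico (0 : ℝ) 1) = 1)
    (hνinv : MeasureTheory.Measure.map (⇑T) ν = ν)
    (hνper : MeasureTheory.Measure.map (fun t : ℝ => t + 1) ν = ν)
    (hcomp : ∀ u v : ℝ, u ≤ v → v ≤ u + 1 →
      Cm * (ν (Set.Icc u v)).toReal ≤ v - u ∧ v - u ≤ Cp * (ν (Set.Icc u v)).toReal)
    (hμmono : ∀ (m : ℕ) (z : ℝ), Monotone (μ m z))
    (hμeig : ∀ (m : ℕ) (z : ℝ),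
      (HPer lam f T z m).charpoly = ∏ i, (X - Polynomial.C (μ m z i)))
    (hN : ∀ E : ℝ, Filter.Tendsto (fun m : ℕ =>
      (1 / (m : ℝ)) * ∫ x in Set.Ico (0 : ℝ) 1,
        ((Finset.univ.filter fun i : Fin m => μ m x i ≤ E).card : ℝ) ∂ν)
      Filter.atTop (nhds (N E))) :
    ∀ E E' : ℝ, |N E - N E'| ≤ |E - E'| / (lam * γm * Cm) := by
  have : IsCircleLift ν := ⟨hνprob, hνper⟩
  have hsawtooth := IsSawtooth.of_forall_Ico hfper fun u v hu huv hv => (hfLip u v hu huv hv).1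
  exact IDS_lipschitz_general (hsawtooth.const_mul hlam.le) (mul_pos hlam hγm) hCm
    isHermitian_hoppingMatrix hTmono hνinv (fun u v huv hv => (hcomp u v huv hv).1)
    (fun m z => HPer_eq_hoppingMatrix_add_diagonal lam f T z m ▸ hμeig m z) hN
end
end

section
/- Let d > 0 and let μ be a Borel probability measure on ℝ that is absolutely continuous with respect to Lebesgue measure with Radon–Nikodym derivative bounded almost everywhere by 1/d. Then for every E ∈ ℝ, ∫_ℝ ln|E′ − E| dμ(E′) ≥ ln(d/(2e)). -/
/-!
By the bathtub principle, among the measures `μ ≤ (1/d) • volume` of mass `m` the potential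
`∫ ln |E' - E| dμ` is smallest when `μ` is spread with full density over the interval of radius
`r = m d / 2` about `E`. Concretely, `ln r - ln |E' - E| ≤ (ln r - ln |E' - E|)⁺` for every `r > 0`,
and the right-hand side has Lebesgue integral `2 r`. Integrating against `μ` gives
`m ln r - 2 r / d ≤ ∫ ln |E' - E| dμ`, which at `r = m d / 2` is the bound
`m ln (m d / (2 e))`.
-/

open MeasureTheory Polynomial Filter

noncomputable section

attribute [local instance] Matrix.normedAddCommGroup

section Bathtub

variable {α : Type*} [MeasurableSpace α] {μ ν : Measure α}

theorem le_smul_of_rnDeriv_le [μ.HaveLebesgueDecomposition ν] (hac : μ ≪ ν) {c : ENNReal}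
    (hc : ∀ᵐ x ∂ν, μ.rnDeriv ν x ≤ c) : μ ≤ c • ν := by
  rw [← Measure.withDensity_rnDeriv_eq μ ν hac, ← withDensity_const]
  exact withDensity_mono hc

theorem measureReal_univ_mul_sub_integral_posPart_le_integral [IsFiniteMeasure μ] (hμν : μ ≤ ν)
    {f : α → ℝ} (hf : Integrable f μ) (t : ℝ) (hft : Integrable (fun x ↦ (t - f x)⁺) ν) :
    μ.real Set.univ * t - ∫ x, (t - f x)⁺ ∂ν ≤ ∫ x, f x ∂μ := by
  have hsub : Integrable (fun x ↦ t - f x) μ := (integrable_const t).sub hf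
  have hle : μ.real Set.univ * t - ∫ x, f x ∂μ ≤ ∫ x, (t - f x)⁺ ∂ν :=
    calc μ.real Set.univ * t - ∫ x, f x ∂μ = ∫ x, (t - f x) ∂μ := by
          rw [integral_sub (integrable_const t) hf, integral_const, smul_eq_mul]
      _ ≤ ∫ x, (t - f x)⁺ ∂μ :=
          integral_mono hsub (hft.mono_measure hμν) fun _ ↦ le_posPart _
      _ ≤ ∫ x, (t - f x)⁺ ∂ν :=
          integral_mono_measure hμν (ae_of_all _ fun _ ↦ posPart_nonneg _) hft
  linarith

end Bathtub

section LogPotential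

variable {r : ℝ}

theorem posPart_log_sub_log_eq_indicator_Ioc (hr : 0 < r) {x : ℝ} (hx : 0 < x) :
    (Real.log r - Real.log x)⁺ = (Set.Ioc 0 r).indicator (fun y ↦ Real.log r - Real.log y) x := by
  rcases le_or_gt x r with hxr | hrx
  · rw [Set.indicator_of_mem (Set.mem_Ioc.2 ⟨hx, hxr⟩), posPart_of_nonneg]
    exact sub_nonneg.2 (Real.log_le_log hx hxr)
  · rw [Set.indicator_of_notMem fun h ↦ hrx.not_ge h.2, posPart_of_nonpos]
    exact sub_nonpos.2 (Real.log_le_log hr hrx.le)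

theorem integral_Ioi_posPart_log_sub_log (hr : 0 < r) :
    ∫ x in Set.Ioi 0, (Real.log r - Real.log x)⁺ = r :=
  calc ∫ x in Set.Ioi 0, (Real.log r - Real.log x)⁺
      = ∫ x in Set.Ioi 0, (Set.Ioc 0 r).indicator (fun y ↦ Real.log r - Real.log y) x :=
        setIntegral_congr_fun measurableSet_Ioi fun _ hx ↦
          posPart_log_sub_log_eq_indicator_Ioc hr hx
    _ = ∫ x in 0..r, (Real.log r - Real.log x) := by
        rw [setIntegral_indicator measurableSet_Ioc,
          Set.inter_eq_right.2 Set.Ioc_subset_Ioi_self, intervalIntegral.integral_of_le hr.le]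
    _ = r := by
        rw [intervalIntegral.integral_sub intervalIntegrable_const
          intervalIntegral.intervalIntegrable_log', intervalIntegral.integral_const,
          integral_log_from_zero, smul_eq_mul]
        ring

theorem integral_posPart_log_sub_log_abs_sub (hr : 0 < r) (a : ℝ) :
    ∫ x, (Real.log r - Real.log |x - a|)⁺ = 2 * r := by
  rw [integral_sub_right_eq_self (fun x ↦ (Real.log r - Real.log |x|)⁺) a,
    integral_comp_abs (f := fun x ↦ (Real.log r - Real.log x)⁺),
    integral_Ioi_posPart_log_sub_log hr]

theorem integrable_posPart_log_sub_log_abs_sub (hr : 0 < r) (a : ℝ) :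
    Integrable fun x ↦ (Real.log r - Real.log |x - a|)⁺ := by
  refine .of_integral_ne_zero ?_
  rw [integral_posPart_log_sub_log_abs_sub hr a]
  positivity

theorem measureReal_univ_mul_log_sub_le_integral_log_abs_sub {μ : Measure ℝ} [IsFiniteMeasure μ]
    {c : ENNReal} (hc : c ≠ ⊤) (hμ : μ ≤ c • volume) {a : ℝ}
    (hint : Integrable (fun x ↦ Real.log |x - a|) μ) (hr : 0 < r) :
    μ.real Set.univ * Real.log r - c.toReal * (2 * r) ≤ ∫ x, Real.log |x - a| ∂μ := by
  have hbathtub := measureReal_univ_mul_sub_integral_posPart_le_integral hμ hint (Real.log r)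
    ((integrable_posPart_log_sub_log_abs_sub hr a).smul_measure hc)
  rwa [integral_smul_measure, integral_posPart_log_sub_log_abs_sub hr, smul_eq_mul] at hbathtub

end LogPotential

theorem log_potential_lower_bound_general {d : ℝ} (hd : 0 < d) {μ : Measure ℝ} [IsFiniteMeasure μ]
    (hac : μ ≪ volume) (hbound : ∀ᵐ x, μ.rnDeriv volume x ≤ ENNReal.ofReal (1 / d)) {E : ℝ}
    (hint : Integrable (fun x ↦ Real.log |x - E|) μ) :
    μ.real Set.univ * Real.log (μ.real Set.univ * d / (2 * Real.exp 1)) ≤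
      ∫ x, Real.log |x - E| ∂μ := by
  rcases eq_zero_or_neZero μ with rfl | hμ
  · simp
  set m := μ.real Set.univ
  have hm : 0 < m := measureReal_univ_pos
  have hr : 0 < m * d / 2 := by positivity
  calc m * Real.log (m * d / (2 * Real.exp 1))
      = m * Real.log (m * d / 2) - (ENNReal.ofReal (1 / d)).toReal * (2 * (m * d / 2)) := by
        rw [← div_div, Real.log_div hr.ne' (Real.exp_ne_zero 1), Real.log_exp,
          ENNReal.toReal_ofReal (by positivity)]
        field_simp
    _ ≤ ∫ x, Real.log |x - E| ∂μ :=
        measureReal_univ_mul_log_sub_le_integral_log_abs_sub ENNReal.ofReal_ne_top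
          (le_smul_of_rnDeriv_le hac hbound) hint hr

/-- If `μ` is a Borel probability measure on `ℝ`, absolutely continuous
with density bounded a.e. by `1/d`, then its logarithmic potential at every `E` is at least
`ln (d / (2e))` (the integral being `+∞`, i.e. not Bochner-integrable, is allowed; note that
the negative part of the integrand is always `μ`-integrable under these hypotheses). -/
theorem log_potential_lower_bound
    (d : ℝ) (hd : 0 < d) (μ : Measure ℝ) [IsProbabilityMeasure μ]
    (hac : μ ≪ MeasureTheory.volume)
    (hbound : ∀ᵐ E' ∂(MeasureTheory.volume : Measure ℝ),
      μ.rnDeriv MeasureTheory.volume E' ≤ ENNReal.ofReal (1 / d)) (E : ℝ) :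
    (¬ MeasureTheory.Integrable (fun E' : ℝ => Real.log |E' - E|) μ) ∨
      Real.log (d / (2 * Real.exp 1)) ≤ ∫ E', Real.log |E' - E| ∂μ := by
  exact or_iff_not_imp_left.2 fun hint ↦ by
    simpa using log_potential_lower_bound_general hd hac hbound (not_not.1 hint)
end
end
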